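/- Let r, c₁, c₃ be real numbers with |r| < 1, |c₃| < 1, r² + c₁² < 1, let 0 ≤ p ≤ 1, and let ε_p(ρ) be as in the context with s = c₃·r and c₂ = −c₃·c₁. Then the quantum mutual information I(ε_p(ρ)) := S(A) + S(B) − S(ε_p(ρ)), where A and B are the partial traces of ε_p(ρ) over the second and first qubit respectively, equals f(r) + f(c₃r) − f(c₃) − f(√(r² + (1−p)⁴c₁²)). -/

import Mathlib

open Matrix Polynomial
open scoped Kronecker ComplexOrder

noncomputable section

/-- 2×2 complex matrices. -/
abbrev M2 : Type := Matrix (Fin 2) (Fin 2) ℂ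
/-- 4×4 complex matrices, indexed by pairs (two-qubit operators). -/
abbrev M4 : Type := Matrix (Fin 2 × Fin 2) (Fin 2 × Fin 2) ℂ

/-- Pauli matrix σ₁. -/
def σ1 : M2 := !![0, 1; 1, 0]
/-- Pauli matrix σ₂. -/
def σ2 : M2 := !![0, -Complex.I; Complex.I, 0]
/-- Pauli matrix σ₃. -/
def σ3 : M2 := !![1, 0; 0, -1]

/-- f(t) = −((1−t)/2)·log₂(1−t) − ((1+t)/2)·log₂(1+t); the convention
0·log₂0 = 0 is automatic since `Real.logb 2 0 = 0`. -/
def f (t : ℝ) : ℝ :=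
  -((1 - t) / 2) * Real.logb 2 (1 - t) - ((1 + t) / 2) * Real.logb 2 (1 + t)

/-- Von Neumann entropy (base 2): −Σ λᵢ log₂ λᵢ over the eigenvalues of `X`
(the roots of the characteristic polynomial, with multiplicity; for a PSD
Hermitian matrix these are the real nonnegative eigenvalues). -/
def entropy {n : Type} [Fintype n] [DecidableEq n] (X : Matrix n n ℂ) : ℝ :=
  -((X.charpoly.roots.map (fun z => z.re * Real.logb 2 z.re)).sum)

/-- The state ρ = (1/4)[I⊗I + r σ₃⊗I + s I⊗σ₃ + c₁ σ₁⊗σ₁ + c₂ σ₂⊗σ₂ + c₃ σ₃⊗σ₃]. -/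
def rho (r s c1 c2 c3 : ℝ) : M4 :=
  (1 / 4 : ℂ) • ((1 : M2) ⊗ₖ (1 : M2) + (r : ℂ) • (σ3 ⊗ₖ (1 : M2))
    + (s : ℂ) • ((1 : M2) ⊗ₖ σ3) + (c1 : ℂ) • (σ1 ⊗ₖ σ1)
    + (c2 : ℂ) • (σ2 ⊗ₖ σ2) + (c3 : ℂ) • (σ3 ⊗ₖ σ3))

/-- The state after the phase-flip channel:
ε_p(ρ) = (1/4)[I⊗I + r σ₃⊗I + s I⊗σ₃ + (1−p)²c₁ σ₁⊗σ₁ + (1−p)²c₂ σ₂⊗σ₂ + c₃ σ₃⊗σ₃]. -/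
def epsRho (p r s c1 c2 c3 : ℝ) : M4 :=
  rho r s ((1 - p) ^ 2 * c1) ((1 - p) ^ 2 * c2) c3

/-- Partial trace over the second qubit. -/
def ptraceB (X : M4) : M2 := Matrix.of fun i j => ∑ k : Fin 2, X (i, k) (j, k)

/-- Partial trace over the first qubit. -/
def ptraceA (X : M4) : M2 := Matrix.of fun i j => ∑ k : Fin 2, X (k, i) (k, j)

/-- (I⊗B) X (I⊗B): the (unnormalized) post-measurement operator. -/
def measOp (B : M2) (X : M4) : M4 :=
  ((1 : M2) ⊗ₖ B) * X * ((1 : M2) ⊗ₖ B)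

/-- p_k = Tr[(I⊗B) X (I⊗B)] (real part). -/
def prob (B : M2) (X : M4) : ℝ := ((measOp B X).trace).re

/-- Conditional entropy p₀ S(ρ₀) + p₁ S(ρ₁) for the projective measurement {B, I−B}
on the second qubit, with ρ_k = (I⊗B_k) X (I⊗B_k) / p_k (with the convention that
a zero-probability outcome contributes 0, since then `(p_k)⁻¹ = 0`). -/
def condEnt (X : M4) (B : M2) : ℝ :=
  prob B X * entropy (((prob B X : ℝ) : ℂ)⁻¹ • measOp B X)
    + prob (1 - B) X * entropy (((prob (1 - B) X : ℝ) : ℂ)⁻¹ • measOp (1 - B) X)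

/-- B is a rank-one orthogonal projection on ℂ². -/
def IsRankOneProj (B : M2) : Prop := B.IsHermitian ∧ B * B = B ∧ B.rank = 1

/-!
A qubit state with Bloch vector of length `t` has eigenvalues
`(1 ± t) / 2`, hence entropy `1 + f t`; both marginals are of this kind. For the joint state, the
relations `s = c₃ r` and `c₂ = -c₃ c₁` say exactly that
`4 ρ = (I⊗I + c₃ σ₃⊗σ₃) (I⊗I + r σ₃⊗I + c₁ σ₁⊗σ₁)`, and conjugation by a CNOT gate sends
`σ₃⊗σ₃ ↦ I⊗σ₃`, `σ₃⊗I ↦ σ₃⊗I`, `σ₁⊗σ₁ ↦ σ₁⊗I`. So `ρ` is a product state up to a permutation of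
the basis, and its entropy is the sum of the entropies of two qubits. The channel only replaces
`c₁` by `(1 - p)² c₁`, which preserves both relations.
-/

open Real (log negMulLog)

section KroneckerSpectrum

variable {𝕜 m n : Type*} [RCLike 𝕜] [Fintype m] [DecidableEq m] [Fintype n] [DecidableEq n]

lemma charpoly_kronecker_of_isHermitian {A : Matrix m m 𝕜} {B : Matrix n n 𝕜}
    (hA : A.IsHermitian) (hB : B.IsHermitian) :
    (A ⊗ₖ B).charpoly =
      ∏ i : m × n, (X - C ((hA.eigenvalues i.1 * hB.eigenvalues i.2 : ℝ) : 𝕜)) := by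
  let U : Matrix m m 𝕜 := hA.eigenvectorUnitary
  let V : Matrix n n 𝕜 := hB.eigenvectorUnitary
  have hU : star U * U = 1 := Unitary.coe_star_mul_self _
  have hV : star V * V = 1 := Unitary.coe_star_mul_self _
  have diagonalization : A ⊗ₖ B =
      (U ⊗ₖ V) * (diagonal (RCLike.ofReal ∘ hA.eigenvalues) ⊗ₖ
        diagonal (RCLike.ofReal ∘ hB.eigenvalues)) * (star U ⊗ₖ star V) := by
    rw [← mul_kronecker_mul, ← mul_kronecker_mul]
    exact congrArg₂ _ hA.spectral_theorem hB.spectral_theorem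
  rw [diagonalization, charpoly_mul_comm, ← mul_assoc, ← mul_kronecker_mul, hU, hV,
    one_kronecker_one, one_mul, diagonal_kronecker_diagonal, charpoly_diagonal]
  simp

end KroneckerSpectrum

section Entropy

variable {m n : Type} [Fintype m] [DecidableEq m] [Fintype n] [DecidableEq n]

lemma entropy_eq_of_charpoly_eq_prod {ι : Type*} [Fintype ι] {A : Matrix n n ℂ} {d : ι → ℝ}
    (h : A.charpoly = ∏ i, (X - C (d i : ℂ))) :
    entropy A = (∑ i, negMulLog (d i)) / log 2 := by
  have roots_eq : A.charpoly.roots = Finset.univ.val.map fun i => (d i : ℂ) := by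
    simpa [h] using roots_multiset_prod_X_sub_C (Finset.univ.val.map fun i => (d i : ℂ))
  simp only [entropy, roots_eq, Multiset.map_map, Function.comp_def, Complex.ofReal_re,
    Finset.sum_map_val, Finset.sum_div, ← Finset.sum_neg_distrib]
  refine Finset.sum_congr rfl fun i _ => ?_
  rw [negMulLog, Real.logb]
  ring

lemma entropy_eq_sum_eigenvalues {A : Matrix n n ℂ} (hA : A.IsHermitian) :
    entropy A = (∑ i, negMulLog (hA.eigenvalues i)) / log 2 :=
  entropy_eq_of_charpoly_eq_prod hA.charpoly_eq

lemma entropy_reindex (e : m ≃ n) (A : Matrix m m ℂ) : entropy (reindex e e A) = entropy A := by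
  rw [entropy, entropy, charpoly_reindex]

lemma entropy_kronecker {A : Matrix m m ℂ} {B : Matrix n n ℂ}
    (hA : A.IsHermitian) (hB : B.IsHermitian) :
    entropy (A ⊗ₖ B) = B.trace.re * entropy A + A.trace.re * entropy B := by
  have trace_A : A.trace.re = ∑ i, hA.eigenvalues i := by simp [hA.trace_eq_sum_eigenvalues]
  have trace_B : B.trace.re = ∑ j, hB.eigenvalues j := by simp [hB.trace_eq_sum_eigenvalues]
  have entropy_AB : entropy (A ⊗ₖ B) =
      (∑ i : m × n, negMulLog (hA.eigenvalues i.1 * hB.eigenvalues i.2)) / log 2 :=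
    entropy_eq_of_charpoly_eq_prod (charpoly_kronecker_of_isHermitian hA hB)
  rw [entropy_AB, entropy_eq_sum_eigenvalues hA, entropy_eq_sum_eigenvalues hB, trace_A, trace_B,
    mul_div_assoc', mul_div_assoc', ← add_div]
  simp only [Real.negMulLog_mul, Fintype.sum_prod_type, Finset.sum_add_distrib,
    Finset.sum_mul_sum]
  congr 2
  exact Finset.sum_comm

end Entropy

lemma f_neg (t : ℝ) : f (-t) = f t := by
  simp only [f, sub_neg_eq_add, ← sub_eq_add_neg]
  ring

lemma f_abs (t : ℝ) : f |t| = f t := by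
  rcases abs_choice t with h | h <;> rw [h]
  exact f_neg t

lemma one_add_f (t : ℝ) :
    1 + f t = (negMulLog ((1 + t) / 2) + negMulLog ((1 - t) / 2)) / log 2 := by
  have log_two_ne_zero : log 2 ≠ 0 := (Real.log_pos one_lt_two).ne'
  simp only [f, Real.logb, div_eq_mul_inv (1 + t), div_eq_mul_inv (1 - t), Real.negMulLog_mul]
  simp only [negMulLog, Real.log_inv]
  field_simp
  ring

/-- The qubit state `(I + x σ₁ + y σ₂ + z σ₃) / 2` with Bloch vector `(x, y, z)`. The vector is not
required to lie in the unit ball, so the matrix has trace one but may fail to be positive. -/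
def blochState (x y z : ℝ) : M2 :=
  (1 / 2 : ℂ) • (1 + (x : ℂ) • σ1 + (y : ℂ) • σ2 + (z : ℂ) • σ3)

section BlochState

variable (x y z : ℝ)

lemma blochState_eq :
    blochState x y z = !![(1 + (z : ℂ)) / 2, ((x : ℂ) - y * Complex.I) / 2;
      ((x : ℂ) + y * Complex.I) / 2, (1 - (z : ℂ)) / 2] := by
  ext i j
  fin_cases i <;> fin_cases j <;> simp [blochState, σ1, σ2, σ3] <;> ring

lemma isHermitian_blochState : (blochState x y z).IsHermitian := by
  ext i j
  fin_cases i <;> fin_cases j <;> simp [blochState_eq, sub_eq_add_neg]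

lemma trace_blochState : (blochState x y z).trace = 1 := by
  rw [blochState_eq, trace_fin_two_of]
  ring

lemma det_blochState : (blochState x y z).det = (1 - (x ^ 2 + y ^ 2 + z ^ 2)) / 4 := by
  rw [blochState_eq, det_fin_two_of]
  linear_combination (y ^ 2 / 4 : ℂ) * Complex.I_sq

lemma entropy_blochState : entropy (blochState x y z) = 1 + f √(x ^ 2 + y ^ 2 + z ^ 2) := by
  set t : ℝ := √(x ^ 2 + y ^ 2 + z ^ 2)
  have t_sq : (t : ℂ) ^ 2 = x ^ 2 + y ^ 2 + z ^ 2 := by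
    exact_mod_cast Real.sq_sqrt (by positivity : 0 ≤ x ^ 2 + y ^ 2 + z ^ 2)
  have charpoly_eq : (blochState x y z).charpoly =
      ∏ i : Fin 2, (X - C ((![(1 + t) / 2, (1 - t) / 2] i : ℝ) : ℂ)) := by
    rw [charpoly_fin_two, trace_blochState, det_blochState, ← t_sq]
    refine Polynomial.funext fun w => ?_
    simp only [Fin.prod_univ_two, cons_val_zero, cons_val_one, eval_add, eval_sub, eval_mul,
      eval_pow, eval_X, eval_C]
    push_cast
    ring
  rw [entropy_eq_of_charpoly_eq_prod charpoly_eq, one_add_f]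
  simp

lemma entropy_blochState_zero_zero : entropy (blochState 0 0 z) = 1 + f z := by
  simp [entropy_blochState, Real.sqrt_sq_eq_abs, f_abs]

end BlochState

lemma ptraceB_rho (r s c1 c2 c3 : ℝ) : ptraceB (rho r s c1 c2 c3) = blochState 0 0 r := by
  ext i j
  fin_cases i <;> fin_cases j <;> simp [ptraceB, rho, blochState_eq, σ1, σ2, σ3] <;> ring

lemma ptraceA_rho (r s c1 c2 c3 : ℝ) : ptraceA (rho r s c1 c2 c3) = blochState 0 0 s := by
  ext i j
  fin_cases i <;> fin_cases j <;> simp [ptraceA, rho, blochState_eq, σ1, σ2, σ3] <;> ring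

/-- The CNOT gate as a permutation `(i, j) ↦ (i, i + j)` of the computational basis, the first
qubit being the control. -/
def cnot : Fin 2 × Fin 2 ≃ Fin 2 × Fin 2 :=
  Equiv.prodShear (Equiv.refl _) Equiv.addLeft

lemma reindex_cnot_rho (r c1 c3 : ℝ) :
    reindex cnot cnot (rho r (c3 * r) c1 (-(c3 * c1)) c3) =
      blochState c1 0 r ⊗ₖ blochState 0 0 c3 := by
  ext ⟨i, j⟩ ⟨k, l⟩
  fin_cases i <;> fin_cases j <;> fin_cases k <;> fin_cases l <;>
    simp [cnot, Equiv.prodShear, rho, blochState_eq, σ1, σ2, σ3] <;> ring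

lemma entropy_rho (r c1 c3 : ℝ) :
    entropy (rho r (c3 * r) c1 (-(c3 * c1)) c3) = 2 + f √(r ^ 2 + c1 ^ 2) + f c3 := by
  rw [← entropy_reindex cnot, reindex_cnot_rho,
    entropy_kronecker (isHermitian_blochState _ _ _) (isHermitian_blochState _ _ _),
    trace_blochState, trace_blochState, entropy_blochState, entropy_blochState_zero_zero,
    zero_pow two_ne_zero, add_zero, add_comm (c1 ^ 2), Complex.one_re]
  ring

theorem stmt11_general (r c1 c3 p : ℝ) (_hc3 : |c3| ≤ 1)
    (_hrc : r ^ 2 + (1 - p) ^ 4 * c1 ^ 2 ≤ 1) :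
    entropy (ptraceB (epsRho p r (c3 * r) c1 (-(c3 * c1)) c3)) +
      entropy (ptraceA (epsRho p r (c3 * r) c1 (-(c3 * c1)) c3)) -
      entropy (epsRho p r (c3 * r) c1 (-(c3 * c1)) c3) =
    f r + f (c3 * r) - f c3 - f √(r ^ 2 + (1 - p) ^ 4 * c1 ^ 2) := by
  have hc2 : (1 - p) ^ 2 * -(c3 * c1) = -(c3 * ((1 - p) ^ 2 * c1)) := by ring
  have hc1 : ((1 - p) ^ 2 * c1) ^ 2 = (1 - p) ^ 4 * c1 ^ 2 := by ring
  rw [epsRho, ptraceB_rho, ptraceA_rho, entropy_blochState_zero_zero,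
    entropy_blochState_zero_zero, hc2, entropy_rho, hc1]
  ring

/-- with s = c₃r, c₂ = −c₃c₁, the quantum mutual information of ε_p(ρ)
is f(r) + f(c₃r) − f(c₃) − f(√(r² + (1−p)⁴c₁²)). -/
theorem stmt11 (r c1 c3 p : ℝ) (hr : |r| < 1) (hc3 : |c3| < 1)
    (hrc : r ^ 2 + c1 ^ 2 < 1) (hp0 : 0 ≤ p) (hp1 : p ≤ 1) :
    entropy (ptraceB (epsRho p r (c3 * r) c1 (-(c3 * c1)) c3)) +
      entropy (ptraceA (epsRho p r (c3 * r) c1 (-(c3 * c1)) c3)) -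
      entropy (epsRho p r (c3 * r) c1 (-(c3 * c1)) c3) =
    f r + f (c3 * r) - f c3 - f (Real.sqrt (r ^ 2 + (1 - p) ^ 4 * c1 ^ 2)) := by
  have hq : (1 - p) ^ 4 ≤ 1 := pow_le_one₀ (sub_nonneg.2 hp1) (sub_le_self 1 hp0)
  exact stmt11_general r c1 c3 p hc3.le (by nlinarith [sq_nonneg c1])
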